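/- Let X and Y be metric spaces and let f : X → Y be a map that is coarse and coarsely n-to-1 (n ≥ 1). Suppose there is an integer m ≥ 1 such that for every R > 0 there exist families 𝒱₁, …, 𝒱ₘ of subsets of Y whose union 𝒱 = 𝒱₁ ∪ … ∪ 𝒱ₘ is a uniformly bounded cover of Y with each 𝒱ᵢ R-disjoint. Then for every R > 0 there exists a uniformly bounded cover of X with Lebesgue number at least R and multiplicity at most n·m; in particular X has asymptotic dimension at most n·m − 1. -/

import Mathlib

open Metric Set

/-- A set `U` is uniformly bounded by `D`: all pairwise distances are at most `D`. -/
def UBdd {X : Type*} [MetricSpace X] (D : ℝ) (U : Set X) : Prop :=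
  ∀ x ∈ U, ∀ y ∈ U, dist x y ≤ D

/-- A family of subsets covers `X`. -/
def IsCover {X : Type*} (𝒱 : Set (Set X)) : Prop := ∀ x : X, ∃ U ∈ 𝒱, x ∈ U

/-- The cover `𝒱` has Lebesgue number at least `R`: every open `R`-ball is
contained in some member of `𝒱`. -/
def LebAtLeast {X : Type*} [MetricSpace X] (R : ℝ) (𝒱 : Set (Set X)) : Prop :=
  ∀ x : X, ∃ U ∈ 𝒱, Metric.ball x R ⊆ U

/-- The family `𝒱` has multiplicity at most `m`: every point belongs to at most
`m` members of `𝒱`. -/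
def MultAtMost {X : Type*} (m : ℕ) (𝒱 : Set (Set X)) : Prop :=
  ∀ x : X, {U ∈ 𝒱 | x ∈ U}.Finite ∧ {U ∈ 𝒱 | x ∈ U}.ncard ≤ m

/-- The family `𝒱` is `R`-disjoint: points of distinct members are at distance at least `R`. -/
def RDisjoint {X : Type*} [MetricSpace X] (R : ℝ) (𝒱 : Set (Set X)) : Prop :=
  ∀ A ∈ 𝒱, ∀ B ∈ 𝒱, A ≠ B → ∀ a ∈ A, ∀ b ∈ B, R ≤ dist a b

/-- A map is coarse (bornologous). -/
def Coarse {X Y : Type*} [MetricSpace X] [MetricSpace Y] (f : X → Y) : Prop :=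
  ∀ R > (0:ℝ), ∃ S > (0:ℝ), ∀ x x' : X, dist x x' ≤ R → dist (f x) (f x') ≤ S

/-- A map is coarsely `n`-to-`1`: preimages of sets of diameter at most `R` can be covered
by at most `n` sets of diameter at most `S`, where `S` depends only on `R`. -/
def CoarselyNTo1 {X Y : Type*} [MetricSpace X] [MetricSpace Y] (n : ℕ) (f : X → Y) : Prop :=
  ∀ R > (0:ℝ), ∃ S > (0:ℝ), ∀ A : Set Y, UBdd R A →
    ∃ B : Fin n → Set X, f ⁻¹' A ⊆ ⋃ i, B i ∧ ∀ i, UBdd S (B i)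

/-- The star of a set `B` with respect to a family `𝒰`: the union of all members of `𝒰`
meeting `B`. -/
def StarOf {X : Type*} (B : Set X) (𝒰 : Set (Set X)) : Set X :=
  ⋃₀ {U ∈ 𝒰 | (U ∩ B).Nonempty}

/-! A point of `X` that is `R`-close to two preimages `f ⁻¹' A` and `f ⁻¹' A'` makes `A` and `A'`
close in `Y`, so preimages of a sufficiently disjoint family are `2R`-disjoint. Cutting each
preimage into `n` bounded pieces and sorting the pieces by their index and by the colour of `A`
yields `n * m` families that are still `2R`-disjoint. Thickening all pieces by `R` gives Lebesgue
number `R`, and each of the `n * m` families still has multiplicity one. -/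

section Covers

variable {X : Type*}

theorem MultAtMost.iUnion {ι : Type*} [Fintype ι] {k : ι → ℕ} {𝒰 : ι → Set (Set X)}
    (h : ∀ i, MultAtMost (k i) (𝒰 i)) : MultAtMost (∑ i, k i) (⋃ i, 𝒰 i) := by
  intro x
  have members_eq : {U ∈ ⋃ i, 𝒰 i | x ∈ U} = ⋃ i, {U ∈ 𝒰 i | x ∈ U} := by
    ext U
    simp
  rw [members_eq]
  refine ⟨Set.finite_iUnion fun i => (h i x).1, ?_⟩
  calc (⋃ i, {U ∈ 𝒰 i | x ∈ U}).ncard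
      ≤ ∑ i, {U ∈ 𝒰 i | x ∈ U}.ncard := Set.ncard_iUnion_le_of_fintype _
    _ ≤ ∑ i, k i := Finset.sum_le_sum fun i _ => (h i x).2

variable [MetricSpace X]

theorem UBdd.mono {D : ℝ} {U V : Set X} (hV : UBdd D V) (hUV : U ⊆ V) : UBdd D U :=
  fun x hx y hy => hV x (hUV hx) y (hUV hy)

theorem LebAtLeast.isCover {R : ℝ} {𝒱 : Set (Set X)} (h : LebAtLeast R 𝒱) (hR : 0 < R) :
    IsCover 𝒱 := fun x =>
  let ⟨U, hU, hball⟩ := h x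
  ⟨U, hU, hball (mem_ball_self hR)⟩

theorem UBdd.thickening {D δ : ℝ} {U : Set X} (hU : UBdd D U) :
    UBdd (D + 2 * δ) (thickening δ U) := by
  intro x hx y hy
  obtain ⟨u, hu, hxu⟩ := mem_thickening_iff.1 hx
  obtain ⟨v, hv, hyv⟩ := mem_thickening_iff.1 hy
  calc dist x y ≤ dist x u + dist u v + dist v y := dist_triangle4 x u v y
    _ ≤ δ + D + δ := by
        rw [dist_comm v y]
        gcongr
        exact hU u hu v hv
    _ = D + 2 * δ := by ring

theorem IsCover.lebAtLeast_image_thickening {𝒰 : Set (Set X)} (h : IsCover 𝒰) (δ : ℝ) :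
    LebAtLeast δ (thickening δ '' 𝒰) := fun x =>
  let ⟨U, hU, hx⟩ := h x
  ⟨thickening δ U, mem_image_of_mem _ hU, ball_subset_thickening hx δ⟩

theorem RDisjoint.multAtMost_image_thickening {δ : ℝ} {𝒰 : Set (Set X)}
    (h : RDisjoint (2 * δ) 𝒰) : MultAtMost 1 (thickening δ '' 𝒰) := by
  intro x
  have subsingleton : {W ∈ thickening δ '' 𝒰 | x ∈ W}.Subsingleton := by
    rintro _ ⟨⟨U, hU, rfl⟩, hxU⟩ _ ⟨⟨V, hV, rfl⟩, hxV⟩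
    by_contra hne
    obtain ⟨u, hu, hxu⟩ := mem_thickening_iff.1 hxU
    obtain ⟨v, hv, hxv⟩ := mem_thickening_iff.1 hxV
    have far : 2 * δ ≤ dist u v := h U hU V hV (ne_of_apply_ne _ hne) u hu v hv
    have near : dist u v ≤ dist x u + dist x v := dist_triangle_left u v x
    linarith
  have := subsingleton.finite.to_subtype
  exact ⟨subsingleton.finite, Set.ncard_le_one_iff_subsingleton.2 subsingleton⟩

theorem RDisjoint.image_of_subset_preimage {Y : Type*} [MetricSpace Y] {f : X → Y} {r s : ℝ}
    {𝒱 : Set (Set Y)} {P : Set Y → Set X} (h𝒱 : RDisjoint s 𝒱)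
    (hf : ∀ x x', dist x x' < r → dist (f x) (f x') < s) (hP : ∀ A ∈ 𝒱, P A ⊆ f ⁻¹' A) :
    RDisjoint r (P '' 𝒱) := by
  rintro _ ⟨A, hA, rfl⟩ _ ⟨A', hA', rfl⟩ hne x hx x' hx'
  by_contra! hlt
  exact (hf x x' hlt).not_ge <|
    h𝒱 A hA A' hA' (ne_of_apply_ne P hne) (f x) (hP A hA hx) (f x') (hP A' hA' hx')

end Covers

/-- The coloured-cover form of "`X` has asymptotic dimension at most `|ι| - 1`": at every scale `R`
there is a uniformly bounded cover of `X` split into `R`-disjoint families indexed by the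
colours `ι`. A type of colours replaces their number so that colours can be paired. -/
def HasDisjointCovers (ι X : Type*) [MetricSpace X] : Prop :=
  ∀ R > (0 : ℝ), ∃ 𝒱 : ι → Set (Set X), ∃ D > (0 : ℝ),
    IsCover (⋃ i, 𝒱 i) ∧ (∀ U ∈ ⋃ i, 𝒱 i, UBdd D U) ∧ ∀ i, RDisjoint R (𝒱 i)

theorem HasDisjointCovers.of_coarselyNTo1 {ι X Y : Type*} [MetricSpace X] [MetricSpace Y] {n : ℕ}
    {f : X → Y} (hY : HasDisjointCovers ι Y) (hf : Coarse f) (hfn : CoarselyNTo1 n f) :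
    HasDisjointCovers (Fin n × ι) X := by
  intro R hR
  obtain ⟨S, hS, hfS⟩ := hf R hR
  obtain ⟨𝒱, D, hD, hcover, hbdd, hdisj⟩ := hY (S + 1) (by positivity)
  obtain ⟨T, hT, hpieces⟩ := hfn D hD
  choose! B hB_cover hB_bdd using hpieces
  let piece (j : Fin n) (A : Set Y) : Set X := f ⁻¹' A ∩ B A j
  refine ⟨fun p => piece p.1 '' 𝒱 p.2, T, hT, fun x => ?_, ?_, fun p => ?_⟩
  · obtain ⟨A, hA, hxA⟩ := hcover (f x)
    obtain ⟨i, hAi⟩ := mem_iUnion.1 hA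
    obtain ⟨j, hxj⟩ := mem_iUnion.1 (hB_cover A (hbdd A hA) hxA)
    exact ⟨piece j A, mem_iUnion.2 ⟨(j, i), mem_image_of_mem _ hAi⟩, hxA, hxj⟩
  · intro U hU
    obtain ⟨⟨j, i⟩, A, hA, rfl⟩ := mem_iUnion.1 hU
    exact (hB_bdd A (hbdd A (mem_iUnion_of_mem i hA)) j).mono inter_subset_right
  · have hf_lt (x x' : X) (h : dist x x' < R) : dist (f x) (f x') < S + 1 :=
      (hfS x x' h.le).trans_lt (lt_add_one S)
    exact (hdisj p.2).image_of_subset_preimage hf_lt fun A _ => inter_subset_left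

theorem HasDisjointCovers.exists_lebAtLeast_multAtMost {ι X : Type*} [Fintype ι] [MetricSpace X]
    (h : HasDisjointCovers ι X) {R : ℝ} (hR : 0 < R) :
    ∃ 𝒲 : Set (Set X), ∃ D > (0 : ℝ), (∀ W ∈ 𝒲, UBdd D W) ∧
      LebAtLeast R 𝒲 ∧ MultAtMost (Fintype.card ι) 𝒲 := by
  obtain ⟨𝒰, D, hD, hcover, hbdd, hdisj⟩ := h (2 * R) (by positivity)
  refine ⟨thickening R '' ⋃ i, 𝒰 i, D + 2 * R, by positivity, ?_,
    hcover.lebAtLeast_image_thickening R, ?_⟩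
  · rintro _ ⟨U, hU, rfl⟩
    exact (hbdd U hU).thickening
  · rw [image_iUnion, Fintype.card_eq_sum_ones]
    exact MultAtMost.iUnion fun i => (hdisj i).multAtMost_image_thickening

/-- Pulling back finite asymptotic dimension along a coarse, coarsely `n`-to-`1` map:
if `Y` admits, for every `R`, uniformly bounded covers splitting into `m` many `R`-disjoint
families, then `X` admits, for every `R`, a uniformly bounded cover with Lebesgue number at
least `R` and multiplicity at most `n * m`. -/
theorem stmt7 {X Y : Type*} [MetricSpace X] [MetricSpace Y] (n m : ℕ) (hn : 1 ≤ n)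
    (hm : 1 ≤ m) (f : X → Y) (hcoarse : Coarse f) (hnto1 : CoarselyNTo1 n f)
    (hY : ∀ R > (0:ℝ), ∃ V : Fin m → Set (Set Y), ∃ D > (0:ℝ),
      IsCover (⋃ i, V i) ∧ (∀ U ∈ ⋃ i, V i, UBdd D U) ∧ ∀ i, RDisjoint R (V i)) :
    ∀ R > (0:ℝ), ∃ 𝒲 : Set (Set X), ∃ D > (0:ℝ), IsCover 𝒲 ∧ (∀ W ∈ 𝒲, UBdd D W) ∧
      LebAtLeast R 𝒲 ∧ MultAtMost (n * m) 𝒲 := by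
  intro R hR
  have hX : HasDisjointCovers (Fin n × Fin m) X :=
    HasDisjointCovers.of_coarselyNTo1 hY hcoarse hnto1
  obtain ⟨𝒲, D, hD, hbdd, hleb, hmult⟩ := hX.exists_lebAtLeast_multAtMost hR
  rw [Fintype.card_prod, Fintype.card_fin, Fintype.card_fin] at hmult
  exact ⟨𝒲, D, hD, hleb.isCover hR, hbdd, hleb, hmult⟩
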